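/- arXiv:math/9301208 — 5 statements merged into one kernel-verified Lean document; each statement's English description precedes it below -/
import Mathlib

section
/- There exists a function f : C → ℝ that is strictly increasing with respect to the lexicographic order on C; that is, ⟨C, <⟩ is order-isomorphic to a subordering of the reals. -/
/-- `D_η = {σ : ℕ → ℚ | ∀ n, σ (2n) = η n}`. -/
def Dset (η : ℕ → ℚ) : Set (ℕ → ℚ) := {σ | ∀ n, σ (2 * n) = η n}

/-- `S_η`: elements of `D_η` with `σ (2n+1) = 0` for all but finitely many `n`. -/
def Sset (η : ℕ → ℚ) : Set (ℕ → ℚ) :=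
  {σ | σ ∈ Dset η ∧ {n | σ (2 * n + 1) ≠ 0}.Finite}

/-- `C = ⋃_η S_η`. -/
def Cset : Set (ℕ → ℚ) := ⋃ η : ℕ → ℚ, Sset η

/-- The lexicographic (strict) order on `ℕ → ℚ`: `σ < τ` iff they first differ at
some index `k` and `σ k < τ k` there. -/
def lexLt (σ τ : ℕ → ℚ) : Prop := ∃ k, (∀ j < k, σ j = τ j) ∧ σ k < τ k

/-!
If countably many upper sets of `X` separate every pair `x < y`, give them positive weights with
finite sum and send `x` to the total weight of the upper sets containing it: the result is strictly
increasing. For lexicographically ordered sequences with countably many possible values in each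
coordinate, such sets are the preimages of the up-sets `Ici s` under truncation to finite initial
segments: truncation is monotone, takes only countably many values, and preserves a strict
inequality as soon as the segment reaches the first difference.
-/

open Set

section UpperSets

variable {X ι : Type*} [Preorder X] [Countable ι]

theorem exists_strictMono_real_of_isUpperSet {U : ι → Set X} (hU : ∀ i, IsUpperSet (U i))
    (hsep : ∀ ⦃x y⦄, x < y → ∃ i, x ∉ U i ∧ y ∈ U i) : ∃ f : X → ℝ, StrictMono f := by
  have := Encodable.ofCountable ι
  obtain ⟨w, w_pos, _, hw, -⟩ := posSumOfEncodable one_pos ι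
  have summable_indicator (x : X) : Summable ({i | x ∈ U i}.indicator w) :=
    hw.summable.indicator _
  refine ⟨fun x ↦ ∑' i, {i | x ∈ U i}.indicator w i, fun x y hxy ↦ ?_⟩
  obtain ⟨i, hxi, hyi⟩ := hsep hxy
  have indicator_mono : {i | x ∈ U i}.indicator w ≤ {i | y ∈ U i}.indicator w :=
    indicator_le_indicator_of_subset (fun j hxj ↦ hU j hxy.le hxj) fun j ↦ (w_pos j).le
  have indicator_lt : {i | x ∈ U i}.indicator w i < {i | y ∈ U i}.indicator w i := by
    rw [indicator_of_notMem (by exact hxi), indicator_of_mem (by exact hyi)]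
    exact w_pos i
  exact (summable_indicator x).tsum_lt_tsum indicator_mono indicator_lt (summable_indicator y)

theorem exists_strictMono_real_of_monotone {Y : ι → Type*} [∀ i, Preorder (Y i)]
    [∀ i, Countable (Y i)] {g : ∀ i, X → Y i} (hg : ∀ i, Monotone (g i))
    (hsep : ∀ ⦃x y⦄, x < y → ∃ i, g i x < g i y) : ∃ f : X → ℝ, StrictMono f := by
  refine exists_strictMono_real_of_isUpperSet (U := fun p : Σ i, Y i ↦ g p.1 ⁻¹' Ici p.2)
    (fun p ↦ (isUpperSet_Ici p.2).preimage (hg p.1)) fun x y hxy ↦ ?_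
  obtain ⟨i, hi⟩ := hsep hxy
  exact ⟨⟨i, g i y⟩, hi.not_ge, le_rfl⟩

end UpperSets

section Truncation

variable {ι : Type*} [LinearOrder ι] {α : ι → Type*}

/-- The restriction of a dependent function to the initial segment `Iic k`, as a map between
lexicographic orders. -/
def lexTruncate (k : ι) (x : Lex (∀ i, α i)) : Lex (∀ i : Iic k, α i) :=
  toLex ((Iic k).domRestrict (ofLex x))

variable [∀ i, PartialOrder (α i)]

theorem lexTruncate_lt_lexTruncate {k l : ι} (hkl : k ≤ l) {x y : Lex (∀ i, α i)}
    (heq : ∀ j < k, x j = y j) (hlt : x k < y k) : lexTruncate l x < lexTruncate l y :=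
  ⟨⟨k, hkl⟩, fun j hj ↦ heq j hj, hlt⟩

theorem lexTruncate_monotone (l : ι) : Monotone (lexTruncate (α := α) l) := by
  intro x y hxy
  obtain rfl | ⟨k, heq, hlt⟩ := hxy.eq_or_lt
  · exact le_rfl
  obtain hkl | hlk := le_or_gt k l
  · exact (lexTruncate_lt_lexTruncate hkl heq hlt).le
  · exact le_of_eq (funext fun j ↦ heq j (j.2.trans_lt hlk))

theorem exists_lexTruncate_lt {x y : Lex (∀ i, α i)} (hxy : x < y) :
    ∃ k, lexTruncate k x < lexTruncate k y :=
  let ⟨k, heq, hlt⟩ := hxy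
  ⟨k, lexTruncate_lt_lexTruncate le_rfl heq hlt⟩

end Truncation

theorem countable_of_locallyFiniteOrderBot (ι : Type*) [LinearOrder ι] [LocallyFiniteOrderBot ι] :
    Countable ι :=
  have card_Iic_strictMono : StrictMono fun i : ι ↦ (Finset.Iic i).card :=
    fun _ _ hij ↦ Finset.card_lt_card (Finset.Iic_ssubset_Iic.2 hij)
  card_Iic_strictMono.injective.countable

theorem Cset_embeds_in_reals_general {ι : Type*} [LinearOrder ι] [LocallyFiniteOrderBot ι]
    {α : ι → Type*} [∀ i, PartialOrder (α i)] [∀ i, Countable (α i)] :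
    ∃ f : Lex (∀ i, α i) → ℝ, StrictMono f :=
  have := countable_of_locallyFiniteOrderBot ι
  have (k : ι) : Countable (Lex (∀ i : Iic k, α i)) :=
    inferInstanceAs (Countable (∀ i : Iic k, α i))
  exists_strictMono_real_of_monotone lexTruncate_monotone fun _ _ ↦ exists_lexTruncate_lt

theorem lexLt_iff_toLex_lt {σ τ : ℕ → ℚ} : lexLt σ τ ↔ toLex σ < toLex τ :=
  Iff.rfl

/-- `⟨C, <⟩` is order-isomorphic to a subordering of the reals: there is a function
into `ℝ` strictly increasing on `C` with respect to the lexicographic order. -/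
theorem Cset_embeds_in_reals :
    ∃ f : (ℕ → ℚ) → ℝ, ∀ σ ∈ Cset, ∀ τ ∈ Cset, lexLt σ τ → f σ < f τ := by
  obtain ⟨f, hf⟩ := Cset_embeds_in_reals_general (α := fun _ : ℕ ↦ ℚ)
  exact ⟨fun σ ↦ f (toLex σ), fun σ _ τ _ hστ ↦ hf (lexLt_iff_toLex_lt.1 hστ)⟩
end

section
/- Let A, B ⊆ C be amenable. Then 𝒫(A,B) is σ-linked in the following strong sense: there exists a countable family of subsets F_n (n ∈ ℕ) of 𝒫(A,B) whose union is all of 𝒫(A,B), such that for any two conditions p, q belonging to the same F_n, the union of the graphs of p and q is the graph of a condition; in particular p and q are compatible. -/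
/-- A set `A ⊆ C` is amenable if whenever some element of `S_η` agrees with a finite
sequence `s` on all indices below `n`, some element of `A ∩ S_η` does as well. -/
def Amenable (A : Set (ℕ → ℚ)) : Prop :=
  ∀ (η : ℕ → ℚ) (n : ℕ) (s : Fin n → ℚ),
    (∃ ν ∈ Sset η, ∀ k : Fin n, ν k = s k) →
    ∃ ν ∈ A ∩ Sset η, ∀ k : Fin n, ν k = s k

/-- A condition in the forcing `𝒫(A,B)`: a finite partial injection from `A` to `B`
(given by its graph) preserving the lexicographic order and each predicate `S_η`. -/
structure Cond (A B : Set (ℕ → ℚ)) where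
  graph : Set ((ℕ → ℚ) × (ℕ → ℚ))
  finite : graph.Finite
  dom_sub : ∀ ⦃x y⦄, (x, y) ∈ graph → x ∈ A
  ran_sub : ∀ ⦃x y⦄, (x, y) ∈ graph → y ∈ B
  functional : ∀ ⦃x y y'⦄, (x, y) ∈ graph → (x, y') ∈ graph → y = y'
  injective : ∀ ⦃x x' y⦄, (x, y) ∈ graph → (x', y) ∈ graph → x = x'
  ord : ∀ ⦃x y x' y'⦄, (x, y) ∈ graph → (x', y') ∈ graph → (lexLt x x' ↔ lexLt y y')
  pres : ∀ ⦃x y⦄ (η : ℕ → ℚ), (x, y) ∈ graph → (x ∈ Sset η ↔ y ∈ Sset η)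

/-- Two conditions are compatible if some condition extends both. -/
def Compatible {A B : Set (ℕ → ℚ)} (p q : Cond A B) : Prop :=
  ∃ r : Cond A B, p.graph ⊆ r.graph ∧ q.graph ⊆ r.graph

/-!
Two members of the same `S_η` agree from some index on, so for each condition `p` there is an `N`
beyond which every pair `(x, y)` of `p` satisfies `x k = y k`, and below which the finitely many
sequences occurring in `p` are already told apart. The truncation of `p` below `N` is a finite
lexicographic-order-preserving set of pairs of rational words of length `N`, and there are only
countably many such patterns. When `p` and `q` share `N` and the pattern, two pairs of `p ∪ q` are
compared on their heads by the common pattern and, if the heads are equal, on tails that are the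
same on both sides. Hence `p ∪ q` preserves the order; as the order is linear, `p ∪ q` is then
also the graph of a partial injection.
-/

open Set Filter

section LexPreserving

variable {ι α : Type*} [LinearOrder ι]

theorem toLex_lt_toLex_iff_domRestrict [LT α] (a : ι) {x y : ι → α} :
    toLex x < toLex y ↔
      toLex ((Iio a).domRestrict x) < toLex ((Iio a).domRestrict y) ∨
        (Iio a).domRestrict x = (Iio a).domRestrict y ∧
          toLex ((Ici a).domRestrict x) < toLex ((Ici a).domRestrict y) := by
  constructor
  · rintro ⟨k, heq, hlt⟩
    rcases lt_or_ge k a with hk | hk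
    · exact .inl ⟨⟨k, hk⟩, fun j hj => heq j hj, hlt⟩
    · exact .inr ⟨domRestrict_eq_domRestrict_iff.mpr fun j hj => heq j (lt_of_lt_of_le hj hk),
        ⟨k, hk⟩, fun j hj => heq j hj, hlt⟩
  · rintro (⟨⟨k, hk⟩, heq, hlt⟩ | ⟨hhead, ⟨k, hk⟩, heq, hlt⟩)
    · exact ⟨k, fun j hj => heq ⟨j, lt_trans hj hk⟩ hj, hlt⟩
    · refine ⟨k, fun j hj => ?_, hlt⟩
      rcases lt_or_ge j a with hja | hja
      · exact domRestrict_eq_domRestrict_iff.mp hhead hja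
      · exact heq ⟨j, hja⟩ hj

/-- A set of pairs of functions, viewed as the graph of a relation, preserves and reflects the
strict lexicographic order. -/
def LexPreserving [LT α] (G : Set ((ι → α) × (ι → α))) : Prop :=
  ∀ ⦃x y⦄, (x, y) ∈ G → ∀ ⦃x' y'⦄, (x', y') ∈ G → (toLex x < toLex x' ↔ toLex y < toLex y')

/-- The pattern of a set of pairs of functions below `a`: every function is restricted to the
indices below `a`. -/
def initialPattern (a : ι) (G : Set ((ι → α) × (ι → α))) : Set ((Iio a → α) × (Iio a → α)) :=
  Prod.map (Iio a).domRestrict (Iio a).domRestrict '' G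

theorem mk_domRestrict_mem_initialPattern (a : ι) {G : Set ((ι → α) × (ι → α))} {x y : ι → α}
    (h : (x, y) ∈ G) : ((Iio a).domRestrict x, (Iio a).domRestrict y) ∈ initialPattern a G :=
  mem_image_of_mem _ h

theorem LexPreserving.fst_eq_iff_snd_eq [WellFoundedLT ι] [LinearOrder α]
    {G : Set ((ι → α) × (ι → α))} (hG : LexPreserving G) {x y x' y' : ι → α}
    (h : (x, y) ∈ G) (h' : (x', y') ∈ G) : x = x' ↔ y = y' := by
  rw [← toLex_inj, ← toLex_inj (a := y), le_antisymm_iff, le_antisymm_iff]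
  simp only [← not_lt]
  exact and_congr (not_congr (hG h' h)) (not_congr (hG h h'))

theorem LexPreserving.of_initialPattern [WellFoundedLT ι] [LinearOrder α]
    {G : Set ((ι → α) × (ι → α))} {a : ι}
    (hpat : LexPreserving (initialPattern a G)) (htail : ∀ e ∈ G, EqOn e.1 e.2 (Ici a)) :
    LexPreserving G := by
  intro x y h x' y' h'
  have hmem := mk_domRestrict_mem_initialPattern a h
  have hmem' := mk_domRestrict_mem_initialPattern a h'
  have hxy : (Ici a).domRestrict x = (Ici a).domRestrict y :=
    domRestrict_eq_domRestrict_iff.mpr (htail _ h)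
  have hxy' : (Ici a).domRestrict x' = (Ici a).domRestrict y' :=
    domRestrict_eq_domRestrict_iff.mpr (htail _ h')
  rw [toLex_lt_toLex_iff_domRestrict a, toLex_lt_toLex_iff_domRestrict a (x := y), hpat hmem hmem',
    hpat.fst_eq_iff_snd_eq hmem hmem', hxy, hxy']

theorem toLex_domRestrict_lt_iff_of_injOn [Preorder α] {a : ι} {s : Set (ι → α)}
    (hs : InjOn (Iio a).domRestrict s) {x y : ι → α} (hx : x ∈ s) (hy : y ∈ s) :
    toLex ((Iio a).domRestrict x) < toLex ((Iio a).domRestrict y) ↔ toLex x < toLex y := by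
  refine ⟨fun h => (toLex_lt_toLex_iff_domRestrict a).mpr (.inl h), fun h => ?_⟩
  refine ((toLex_lt_toLex_iff_domRestrict a).mp h).resolve_right fun ⟨hhead, _⟩ => ?_
  obtain rfl := hs hx hy hhead
  obtain ⟨k, -, hlt⟩ := h
  exact lt_irrefl _ hlt

theorem LexPreserving.initialPattern [Preorder α] {G : Set ((ι → α) × (ι → α))} {a : ι}
    (hG : LexPreserving G) (hfst : InjOn (Iio a).domRestrict (Prod.fst '' G))
    (hsnd : InjOn (Iio a).domRestrict (Prod.snd '' G)) : LexPreserving (initialPattern a G) := by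
  rintro _ _ ⟨⟨x, y⟩, h, ⟨⟩⟩ _ _ ⟨⟨x', y'⟩, h', ⟨⟩⟩
  calc
    toLex ((Iio a).domRestrict x) < toLex ((Iio a).domRestrict x') ↔ toLex x < toLex x' :=
      toLex_domRestrict_lt_iff_of_injOn hfst (mem_image_of_mem _ h) (mem_image_of_mem _ h')
    _ ↔ toLex y < toLex y' := hG h h'
    _ ↔ toLex ((Iio a).domRestrict y) < toLex ((Iio a).domRestrict y') :=
      (toLex_domRestrict_lt_iff_of_injOn hsnd (mem_image_of_mem _ h) (mem_image_of_mem _ h')).symm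

theorem eventually_injOn_domRestrict_Iio [NoMaxOrder ι] {s : Set (ι → α)} (hs : s.Finite) :
    ∀ᶠ a in atTop, InjOn (Iio a).domRestrict s := by
  refine (eventually_all_finite hs).mpr fun x _ => (eventually_all_finite hs).mpr fun y _ => ?_
  by_cases hxy : x = y
  · exact .of_forall fun _ _ => hxy
  · obtain ⟨k, hk⟩ := Function.ne_iff.mp hxy
    filter_upwards [eventually_gt_atTop k] with a ha heq
    exact absurd (domRestrict_eq_domRestrict_iff.mp heq ha) hk

end LexPreserving

theorem eventuallyEq_of_mem_Sset {η x y : ℕ → ℚ} (hx : x ∈ Sset η) (hy : y ∈ Sset η) :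
    x =ᶠ[atTop] y := by
  rw [← Nat.cofinite_eq_atTop]
  refine ((hx.2.union hy.2).image fun n => 2 * n + 1).subset fun k hk => ?_
  obtain ⟨m, rfl | rfl⟩ := Nat.even_or_odd' k
  · exact absurd ((hx.1 m).trans (hy.1 m).symm) hk
  · refine mem_image_of_mem _ ?_
    by_contra hm
    simp only [mem_union, mem_ofPred_eq, not_or, not_not] at hm
    exact hk (hm.1.trans hm.2.symm)

namespace Cond

variable {A B : Set (ℕ → ℚ)}

theorem lexPreserving_graph (p : Cond A B) : LexPreserving p.graph :=
  fun _ _ h _ _ h' => p.ord h h'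

/-- The union of two conditions, as a condition, when the union of their graphs preserves the
lexicographic order. -/
def union (p q : Cond A B) (h : LexPreserving (p.graph ∪ q.graph)) : Cond A B where
  graph := p.graph ∪ q.graph
  finite := p.finite.union q.finite
  dom_sub _ _ he := he.elim (p.dom_sub ·) (q.dom_sub ·)
  ran_sub _ _ he := he.elim (p.ran_sub ·) (q.ran_sub ·)
  functional _ _ _ he he' := (h.fst_eq_iff_snd_eq he he').mp rfl
  injective _ _ _ he he' := (h.fst_eq_iff_snd_eq he he').mpr rfl
  ord _ _ _ _ he he' := h he he'
  pres _ _ η he := he.elim (p.pres η ·) (q.pres η ·)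

/-- The conditions whose pairs coincide from index `N` on and have the order-preserving pattern
`T` below `N`. The classes with `T` finite are the countably many linked pieces of `𝒫(A,B)`. -/
def patternClass (A B : Set (ℕ → ℚ)) (N : ℕ) (T : Set ((Iio N → ℚ) × (Iio N → ℚ))) :
    Set (Cond A B) :=
  {p | (∀ e ∈ p.graph, EqOn e.1 e.2 (Ici N)) ∧ initialPattern N p.graph = T ∧ LexPreserving T}

theorem lexPreserving_union_of_mem_patternClass {N : ℕ} {T : Set ((Iio N → ℚ) × (Iio N → ℚ))}
    {p q : Cond A B} (hp : p ∈ patternClass A B N T) (hq : q ∈ patternClass A B N T) :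
    LexPreserving (p.graph ∪ q.graph) := by
  obtain ⟨hptail, hpT, hT⟩ := hp
  obtain ⟨hqtail, hqT, -⟩ := hq
  have hpat : initialPattern N (p.graph ∪ q.graph) = T := by
    rw [initialPattern, image_union, ← initialPattern, ← initialPattern, hpT, hqT, union_self]
  exact .of_initialPattern (hpat ▸ hT) fun e he => he.elim (hptail e) (hqtail e)

theorem eventually_eqOn_Ici (hAC : A ⊆ Cset) (p : Cond A B) :
    ∀ᶠ N in atTop, ∀ e ∈ p.graph, EqOn e.1 e.2 (Ici N) := by
  refine (eventually_all_finite p.finite).mpr fun ⟨x, y⟩ he => ?_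
  obtain ⟨η, hx⟩ := mem_iUnion.mp (hAC (p.dom_sub he))
  exact eventually_forall_ge_atTop.mpr (eventuallyEq_of_mem_Sset hx ((p.pres η he).mp hx))

theorem exists_mem_patternClass (hAC : A ⊆ Cset) (p : Cond A B) :
    ∃ (N : ℕ) (T : Finset ((Iio N → ℚ) × (Iio N → ℚ))), p ∈ patternClass A B N T := by
  obtain ⟨N, htail, hfst, hsnd⟩ := ((eventually_eqOn_Ici hAC p).and
    ((eventually_injOn_domRestrict_Iio (p.finite.image Prod.fst)).and
      (eventually_injOn_domRestrict_Iio (p.finite.image Prod.snd)))).exists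
  have hfin : (initialPattern N p.graph).Finite := p.finite.image _
  refine ⟨N, hfin.toFinset, htail, hfin.coe_toFinset.symm, ?_⟩
  rw [hfin.coe_toFinset]
  exact p.lexPreserving_graph.initialPattern hfst hsnd

end Cond

theorem cond_sigma_linked_general (A B : Set (ℕ → ℚ)) (hAC : A ⊆ Cset) :
    ∃ F : ℕ → Set (Cond A B),
      (∀ p : Cond A B, ∃ n, p ∈ F n) ∧
      ∀ n : ℕ, ∀ p ∈ F n, ∀ q ∈ F n,
        (∃ r : Cond A B, r.graph = p.graph ∪ q.graph) ∧ Compatible p q := by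
  obtain ⟨pattern, hpattern⟩ :=
    exists_surjective_nat (Σ N : ℕ, Finset ((Iio N → ℚ) × (Iio N → ℚ)))
  refine ⟨fun n => Cond.patternClass A B (pattern n).1 (pattern n).2, fun p => ?_,
    fun n p hp q hq => ?_⟩
  · obtain ⟨N, T, hp⟩ := p.exists_mem_patternClass hAC
    obtain ⟨n, hn⟩ := hpattern ⟨N, T⟩
    exact ⟨n, by beta_reduce; rwa [hn]⟩
  · let r := p.union q (Cond.lexPreserving_union_of_mem_patternClass hp hq)
    exact ⟨⟨r, rfl⟩, r, subset_union_left, subset_union_right⟩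

/-- For amenable `A, B ⊆ C`, the forcing `𝒫(A,B)` is σ-linked: it is a countable
union of sets `F n` such that the union of the graphs of any two conditions in the
same `F n` is again the graph of a condition; in particular they are compatible. -/
theorem cond_sigma_linked (A B : Set (ℕ → ℚ)) (hAC : A ⊆ Cset) (hBC : B ⊆ Cset)
    (hA : Amenable A) (hB : Amenable B) :
    ∃ F : ℕ → Set (Cond A B),
      (∀ p : Cond A B, ∃ n, p ∈ F n) ∧
      ∀ n : ℕ, ∀ p ∈ F n, ∀ q ∈ F n,
        (∃ r : Cond A B, r.graph = p.graph ∪ q.graph) ∧ Compatible p q :=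
  cond_sigma_linked_general A B hAC
end

section
/- Suppose B ⊆ C is a set that meets each S_η in at most one point, i.e., for every η : ℕ → ℚ the set B ∩ S_η has at most one element. Then A = C \ B is amenable. -/
theorem Sset_subset_Cset (η : ℕ → ℚ) : Sset η ⊆ Cset :=
  Set.subset_iUnion Sset η

theorem update_odd_mem_Sset {η σ : ℕ → ℚ} (hσ : σ ∈ Sset η) (m : ℕ) (q : ℚ) :
    Function.update σ (2 * m + 1) q ∈ Sset η := by
  refine ⟨fun i => ?_, (hσ.2.insert m).subset fun i hi => ?_⟩
  · rw [Function.update_of_ne (by omega)]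
    exact hσ.1 i
  · rcases eq_or_ne i m with rfl | hne
    · exact Set.mem_insert i _
    · rw [Set.mem_ofPred_eq, Function.update_of_ne (by omega)] at hi
      exact Set.mem_insert_of_mem m hi

theorem infinite_mem_Sset_agreeing_below {η σ : ℕ → ℚ} (hσ : σ ∈ Sset η) (n : ℕ) :
    {τ | τ ∈ Sset η ∧ ∀ k < n, τ k = σ k}.Infinite :=
  Set.infinite_of_injective_forall_mem (Function.update_injective σ (2 * n + 1)) fun q =>
    ⟨update_odd_mem_Sset hσ n q, fun _ _ => Function.update_of_ne (by omega) q σ⟩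

theorem amenable_of_small_complement_general {B : Set (ℕ → ℚ)}
    (h : ∀ η : ℕ → ℚ, (B ∩ Sset η).Finite) : Amenable (Cset \ B) := by
  rintro η n s ⟨σ, hσ, hs⟩
  obtain ⟨τ, ⟨hτ, hagree⟩, hτB⟩ :=
    (infinite_mem_Sset_agreeing_below hσ n).exists_notMem_finite (h η)
  exact ⟨τ, ⟨⟨Sset_subset_Cset η hτ, fun hB => hτB ⟨hB, hτ⟩⟩, hτ⟩,
    fun k => (hagree k k.isLt).trans (hs k)⟩

/-- If `B ⊆ C` meets each `S_η` in at most one point, then `C \\ B` is amenable. -/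
theorem amenable_of_small_complement (B : Set (ℕ → ℚ)) (hB : B ⊆ Cset)
    (h : ∀ η : ℕ → ℚ, (B ∩ Sset η).Subsingleton) :
    Amenable (Cset \ B) :=
  amenable_of_small_complement_general fun η => (h η).finite
end

section
/- Suppose B ⊆ C meets each S_η in at most one point, i.e., for every η : ℕ → Bool the set B ∩ S_η has at most one element. Then M = C \ B is amenable. -/
/-- `D_η = {σ : ℕ → Bool | ∀ n, σ (2n) = η n}` in Cantor space. -/
def DsetB (η : ℕ → Bool) : Set (ℕ → Bool) := {σ | ∀ n, σ (2 * n) = η n}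

/-- `b_η` is the element of `D_η` with `b_η (2n) = η n` and `b_η (2n+1) = 1`. -/
def bfun (η : ℕ → Bool) : ℕ → Bool := fun n => if n % 2 = 0 then η (n / 2) else true

/-- `S_η`: elements of `D_η` with `σ (2n+1) = 0` for all but finitely many `n`,
together with the extra point `b_η`. -/
def SsetB (η : ℕ → Bool) : Set (ℕ → Bool) :=
  {σ | σ ∈ DsetB η ∧ {n | σ (2 * n + 1) ≠ false}.Finite} ∪ {bfun η}

/-- `C = ⋃_η S_η`. -/
def CsetB : Set (ℕ → Bool) := ⋃ η : ℕ → Bool, SsetB η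

/-- `E_i (σ, τ)` holds iff `σ` and `τ` agree below `i`. -/
def Erel (i : ℕ) (σ τ : ℕ → Bool) : Prop := ∀ k < i, σ k = τ k

/-- A set `M ⊆ C` is amenable if whenever some element of `S_η` agrees with a finite
sequence `s` on all indices below `n`, some element of `M ∩ S_η` does as well. -/
def AmenableB (M : Set (ℕ → Bool)) : Prop :=
  ∀ (η : ℕ → Bool) (n : ℕ) (s : Fin n → Bool),
    (∃ ν ∈ SsetB η, ∀ k : Fin n, ν k = s k) →
    ∃ ν ∈ M ∩ SsetB η, ∀ k : Fin n, ν k = s k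

/-!
A cylinder of length `n` around a point of `D_η` contains infinitely many points of `S_η`: keep the
first `n` entries and all even entries, and place a single `1` at an arbitrary later odd position.
So no such cylinder loses all its points of `S_η` when finitely many are removed.
-/

variable {η σ : ℕ → Bool}

theorem bfun_mem_DsetB (η : ℕ → Bool) : bfun η ∈ DsetB η := fun n => by simp [bfun]

theorem SsetB_subset_DsetB (η : ℕ → Bool) : SsetB η ⊆ DsetB η :=
  Set.union_subset (fun _ hσ => hσ.1) (Set.singleton_subset_iff.2 (bfun_mem_DsetB η))

theorem SsetB_subset_CsetB (η : ℕ → Bool) : SsetB η ⊆ CsetB := Set.subset_iUnion SsetB η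

/-- The sequence that agrees with `σ` below `n` and at even positions, and whose only possible `1`
at an odd position from `n` on is at `2 * j + 1`. These are the perturbations of `σ` inside `S_η`
when `σ ∈ D_η`. -/
def oddSpike (σ : ℕ → Bool) (n j : ℕ) : ℕ → Bool :=
  fun k => if k < n ∨ Even k then σ k else decide (k = 2 * j + 1)

theorem oddSpike_mem_cylinder (σ : ℕ → Bool) (n j : ℕ) :
    oddSpike σ n j ∈ PiNat.cylinder σ n :=
  fun _ hk => if_pos (Or.inl hk)

theorem oddSpike_mem_DsetB (hσ : σ ∈ DsetB η) (n j : ℕ) : oddSpike σ n j ∈ DsetB η :=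
  fun m => (if_pos (Or.inr (even_two_mul m))).trans (hσ m)

theorem oddSpike_two_mul_add_one {n m : ℕ} (hm : n ≤ m) (σ : ℕ → Bool) (j : ℕ) :
    oddSpike σ n j (2 * m + 1) = decide (m = j) := by
  have hn : ¬ 2 * m + 1 < n := by omega
  simp [oddSpike, hn]

theorem oddSpike_mem_SsetB (hσ : σ ∈ DsetB η) (n j : ℕ) : oddSpike σ n j ∈ SsetB η := by
  refine Or.inl ⟨oddSpike_mem_DsetB hσ n j, ((Set.finite_Iio n).insert j).subset fun m hm => ?_⟩
  rcases lt_or_ge m n with hmn | hnm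
  · exact Or.inr hmn
  · exact Or.inl (by simpa [oddSpike_two_mul_add_one hnm] using hm)

theorem oddSpike_injOn (σ : ℕ → Bool) (n : ℕ) : Set.InjOn (oddSpike σ n) (Set.Ici n) := by
  intro i hi j _ hij
  simpa [oddSpike_two_mul_add_one hi] using congrFun hij (2 * i + 1)

theorem infinite_SsetB_inter_cylinder (hσ : σ ∈ DsetB η) (n : ℕ) :
    (SsetB η ∩ PiNat.cylinder σ n).Infinite :=
  Set.infinite_of_injOn_mapsTo (oddSpike_injOn σ n)
    (fun j _ => ⟨oddSpike_mem_SsetB hσ n j, oddSpike_mem_cylinder σ n j⟩) (Set.Ici_infinite n)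

theorem amenableB_of_small_complement_general (B : Set (ℕ → Bool))
    (h : ∀ η : ℕ → Bool, (B ∩ SsetB η).Finite) : AmenableB (CsetB \ B) := by
  rintro η n s ⟨ν, hν, hνs⟩
  obtain ⟨σ, ⟨hσS, hσν⟩, hσB⟩ :=
    (infinite_SsetB_inter_cylinder (SsetB_subset_DsetB η hν) n).exists_notMem_finite (h η)
  exact ⟨σ, ⟨⟨SsetB_subset_CsetB η hσS, fun hB => hσB ⟨hB, hσS⟩⟩, hσS⟩,
    fun k => (hσν k k.isLt).trans (hνs k)⟩

/-- If `B ⊆ C` meets each `S_η` in at most one point, then `C \\ B` is amenable. -/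
theorem amenableB_of_small_complement (B : Set (ℕ → Bool)) (hB : B ⊆ CsetB)
    (h : ∀ η : ℕ → Bool, (B ∩ SsetB η).Subsingleton) :
    AmenableB (CsetB \ B) :=
  amenableB_of_small_complement_general B fun η => (h η).finite
end

section
/- The structure (C, (E_i)_{i∈ℕ}) is not rigid: there exists an E-preserving bijection from C onto C that is not the identity. -/
/-!
Whether `σ` lies in `C` is decided by the odd coordinates of `σ` alone. Regard Cantor space as the
group `(ℤ/2)^ℕ`, whose addition is the symmetric difference of the Boolean algebra `ℕ → Bool`.
A translation by some `a ≠ 0` preserves every `E_i` and has no fixed point, and it maps `C` onto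
itself as soon as `a` vanishes at the odd coordinates.
-/

theorem eq_bfun_iff {η σ : ℕ → Bool} :
    σ = bfun η ↔ σ ∈ DsetB η ∧ ∀ n, σ (2 * n + 1) = true := by
  constructor
  · rintro rfl
    exact ⟨fun n ↦ by simp [bfun], fun n ↦ by simp [bfun, Nat.add_mod]⟩
  · rintro ⟨heven, hodd⟩
    funext k
    obtain ⟨n, rfl | rfl⟩ := k.even_or_odd'
    · simp [bfun, heven n]
    · simp [bfun, hodd n, Nat.add_mod]

theorem mem_SsetB_iff {η σ : ℕ → Bool} :
    σ ∈ SsetB η ↔ σ ∈ DsetB η ∧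
      ({n | σ (2 * n + 1) ≠ false}.Finite ∨ ∀ n, σ (2 * n + 1) = true) := by
  rw [and_or_left, ← eq_bfun_iff]
  rfl

theorem mem_CsetB_iff {σ : ℕ → Bool} :
    σ ∈ CsetB ↔ {n | σ (2 * n + 1) ≠ false}.Finite ∨ ∀ n, σ (2 * n + 1) = true := by
  simp only [CsetB, Set.mem_iUnion, mem_SsetB_iff]
  exact ⟨fun ⟨_, _, hodd⟩ ↦ hodd, fun hodd ↦ ⟨fun n ↦ σ (2 * n), fun _ ↦ rfl, hodd⟩⟩

theorem mem_CsetB_congr {σ τ : ℕ → Bool} (h : ∀ n, σ (2 * n + 1) = τ (2 * n + 1)) :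
    σ ∈ CsetB ↔ τ ∈ CsetB := by
  simp only [mem_CsetB_iff, h]

theorem bot_mem_CsetB : ⊥ ∈ CsetB :=
  mem_CsetB_iff.2 (.inl (by simp))

theorem erel_symmDiff_iff {i : ℕ} (a σ τ : ℕ → Bool) :
    Erel i (symmDiff a σ) (symmDiff a τ) ↔ Erel i σ τ := by
  simp only [Erel, Pi.symmDiff_apply, symmDiff_right_inj]

theorem bijOn_of_involutive {α : Type*} {f : α → α} {s : Set α} (hf : Function.Involutive f)
    (hs : Set.MapsTo f s s) : Set.BijOn f s s :=
  Set.InvOn.bijOn ⟨hf.leftInverse.leftInvOn s, hf.rightInverse.rightInvOn s⟩ hs hs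

theorem bijOn_symmDiff_CsetB {a : ℕ → Bool} (ha : ∀ n, a (2 * n + 1) = false) :
    Set.BijOn (symmDiff a) CsetB CsetB := by
  refine bijOn_of_involutive (symmDiff_right_involutive a) fun σ hσ ↦ ?_
  have hodd (n : ℕ) : symmDiff a σ (2 * n + 1) = σ (2 * n + 1) := by
    rw [Pi.symmDiff_apply, ha]
    exact bot_symmDiff _
  exact (mem_CsetB_congr hodd).2 hσ

/-- `(C, (E_i))` is not rigid: some `E`-preserving bijection of `C` onto itself is
not the identity. -/
theorem CsetB_not_rigid :
    ∃ f : (ℕ → Bool) → (ℕ → Bool), Set.BijOn f CsetB CsetB ∧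
      (∀ σ ∈ CsetB, ∀ τ ∈ CsetB, ∀ i : ℕ, Erel i σ τ ↔ Erel i (f σ) (f τ)) ∧
      ∃ x ∈ CsetB, f x ≠ x := by
  let a : ℕ → Bool := fun k ↦ decide (k = 0)
  have ha_odd (n : ℕ) : a (2 * n + 1) = false := by simp [a]
  have ha_ne : a ≠ ⊥ := fun h ↦ by simpa [a] using congrFun h 0
  exact ⟨symmDiff a, bijOn_symmDiff_CsetB ha_odd,
    fun σ _ τ _ _ ↦ (erel_symmDiff_iff a σ τ).symm,
    ⊥, bot_mem_CsetB, symmDiff_eq_right.not.2 ha_ne⟩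
end
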